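/- Let h₀ = x₀³ + x₁³ + x₂³ + x₃³, h₁ = Σ_{i ≠ j} x_i²x_j (sum over the twelve monomials x_i²x_j with i ≠ j, indices in {0,1,2,3}), and h₂ = x₀x₁x₂ + x₀x₁x₃ + x₀x₂x₃ + x₁x₂x₃. For (z₀, z₁, z₂) ∈ ℂ³ ∖ {0}, set f = z₀h₀ + z₁h₁ + z₂h₂. Then there exists a point x ∈ ℂ⁴ ∖ {0} at which all four partial derivatives ∂f/∂x₀, …, ∂f/∂x₃ vanish simultaneously if and only if (3z₀ + z₁ − z₂)(z₀ + 3z₁ + z₂)(3z₀ − 3z₁ + z₂)(9z₀³ + 9z₀²z₁ − 3z₀²z₂ − 9z₀z₁² − 6z₀z₁z₂ + 4z₀z₂² + 7z₁³ − 3z₁²z₂) = 0. -/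

import Mathlib

open MvPolynomial

noncomputable section

/-- `h₀ = x₀³ + x₁³ + x₂³ + x₃³`. -/
def h0 : MvPolynomial (Fin 4) ℂ := X 0 ^ 3 + X 1 ^ 3 + X 2 ^ 3 + X 3 ^ 3

/-- `h₁ = Σ_{i ≠ j} xᵢ²xⱼ`, the sum of all twelve monomials `xᵢ²xⱼ` with `i ≠ j`. -/
def h1 : MvPolynomial (Fin 4) ℂ :=
  ∑ i : Fin 4, ∑ j : Fin 4, if i = j then 0 else X i ^ 2 * X j

/-- `h₂ = x₀x₁x₂ + x₀x₁x₃ + x₀x₂x₃ + x₁x₂x₃`. -/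
def h2 : MvPolynomial (Fin 4) ℂ :=
  X 0 * X 1 * X 2 + X 0 * X 1 * X 3 + X 0 * X 2 * X 3 + X 1 * X 2 * X 3

/-!
Every partial derivative `∂f/∂xᵢ` is the value at `t = xᵢ` of one and the same quadratic
`(3z₀ - 3z₁ + z₂) t² + (2z₁ - z₂) p₁(x) t + (z₁ p₂(x) + z₂ e₂(x))`, with `pₖ` the power sums and
`e₂` the elementary symmetric polynomial. If the leading coefficient vanishes, the point
`(1, i, -1, -i)` is singular, because `p₁`, `p₂` and `e₂` vanish there. Otherwise the coordinates
of a singular point take at most two values, so that it is `(c, d, d, d)` or `(c, c, d, d)` up to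
permutation. On each of these two projective lines the equations are two binary quadratic forms
in `c, d` whose difference is divisible by `c - d`. The case `c = d` gives the component
`z₀ + 3z₁ + z₂`, and elimination with the cofactor, a linear form, gives the cubic component on the
first line and `3z₀ + z₁ - z₂` on the second.
-/

section SingularPoint

variable {σ R : Type*} [CommSemiring R]

/-- `x` is a common zero in `Rⁿ ∖ {0}` of the partial derivatives of `f`, that is, it represents a
singular point of the projective hypersurface `V(f)`. The equation `f(x) = 0` is not part of the
definition: for homogeneous `f` of degree invertible in `R` it follows from Euler's formula. -/
def IsSingularPoint (f : MvPolynomial σ R) (x : σ → R) : Prop :=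
  x ≠ 0 ∧ ∀ i, eval x (pderiv i f) = 0

lemma eval_comp_perm_pderiv {f : MvPolynomial σ R} (hf : f.IsSymmetric) (e : Equiv.Perm σ)
    (x : σ → R) (i : σ) : eval (x ∘ e) (pderiv i f) = eval x (pderiv (e i) f) := by
  rw [← eval_rename, ← pderiv_rename e.injective, hf e]

lemma IsSingularPoint.comp_perm {f : MvPolynomial σ R} {x : σ → R} (hx : IsSingularPoint f x)
    (hf : f.IsSymmetric) (e : Equiv.Perm σ) : IsSingularPoint f (x ∘ e) := by
  refine ⟨fun h => hx.1 ?_, fun i => ?_⟩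
  · exact e.surjective.injective_comp_right h
  · rw [eval_comp_perm_pderiv hf, hx.2]

end SingularPoint

section TwoValues

lemma eq_or_eq_neg_div_sub_of_quadratic {K : Type*} [Field K] {α β γ s t : K} (hα : α ≠ 0)
    (hs : α * s ^ 2 + β * s + γ = 0) (ht : α * t ^ 2 + β * t + γ = 0) :
    t = s ∨ t = -β / α - s := by
  have hfactor : (t - s) * (α * (t + s) + β) = 0 := by linear_combination ht - hs
  refine (mul_eq_zero.mp hfactor).imp sub_eq_zero.mp fun h => ?_
  field_simp
  linear_combination h

lemma exists_comp_swap_eq_of_two_values {A : Type*} {x : Fin 4 → A} {a b : A}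
    (h : ∀ i, x i = a ∨ x i = b) :
    ∃ (i j : Fin 4) (c d : A),
      x ∘ Equiv.swap i j = ![c, d, d, d] ∨ x ∘ Equiv.swap i j = ![c, c, d, d] := by
  classical
  have bool_case : ∀ y : Fin 4 → Bool, ∃ (i j : Fin 4) (c d : Bool),
      y ∘ Equiv.swap i j = ![c, d, d, d] ∨ y ∘ Equiv.swap i j = ![c, c, d, d] := by
    decide
  let val : Bool → A := fun t => if t then a else b
  obtain ⟨y, rfl⟩ : ∃ y : Fin 4 → Bool, x = val ∘ y := by
    refine ⟨fun i => decide (x i = a), funext fun i => ?_⟩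
    rcases h i with hi | hi <;> simp [val, hi]
  obtain ⟨i, j, c, d, hy⟩ := bool_case y
  refine ⟨i, j, val c, val d, hy.imp (fun hy => ?_) (fun hy => ?_)⟩ <;>
  · rw [Function.comp_assoc, hy]
    ext k
    fin_cases k <;> rfl

end TwoValues

section Elimination

variable {R : Type*} [CommRing R] [NoZeroDivisors R]

-- The conclusion is the vanishing of the resultant of the two binary forms.
lemma quadratic_form_eq_zero_of_linear_form_eq_zero {p q α β γ c d : R} (hcd : c ≠ 0 ∨ d ≠ 0)
    (hlin : p * c + q * d = 0) (hquad : α * c ^ 2 + β * c * d + γ * d ^ 2 = 0) :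
    α * q ^ 2 - β * q * p + γ * p ^ 2 = 0 := by
  rcases hcd with hc | hd
  · refine (mul_eq_zero.mp ?_).resolve_left (pow_ne_zero 2 hc)
    linear_combination q ^ 2 * hquad + (γ * (p * c - q * d) - β * q * c) * hlin
  · refine (mul_eq_zero.mp ?_).resolve_left (pow_ne_zero 2 hd)
    linear_combination p ^ 2 * hquad - (α * (p * c - q * d) + β * p * d) * hlin

end Elimination

section PartialDerivatives

lemma multiset_esymm_cons_succ {R : Type*} [CommSemiring R] (a : R) (s : Multiset R) (n : ℕ) :
    (a ::ₘ s).esymm (n + 1) = s.esymm (n + 1) + a * s.esymm n := by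
  simp [Multiset.esymm, Multiset.powersetCard_cons, Multiset.sum_map_mul_left]

variable {σ : Type*} [Fintype σ] (R : Type*)

lemma pderiv_psum [CommSemiring R] (i : σ) (n : ℕ) :
    pderiv i (psum σ R n) = (n : MvPolynomial σ R) * X i ^ (n - 1) := by
  classical
  simp [psum, Derivation.leibniz_pow, pderiv_X, Pi.single_apply]

section Erase

variable [CommSemiring R] [DecidableEq σ]

/-- The elementary symmetric polynomial of degree `n` in the variables other than `X i`. -/
def esymmErase (i : σ) (n : ℕ) : MvPolynomial σ R :=
  ∑ t ∈ (Finset.univ.erase i).powersetCard n, ∏ j ∈ t, X j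

lemma esymm_succ_eq_esymmErase_add (i : σ) (n : ℕ) :
    esymm σ R (n + 1) = esymmErase R i (n + 1) + X i * esymmErase R i n := by
  rw [esymm_eq_multiset_esymm, ← Finset.insert_erase (Finset.mem_univ i),
    Finset.insert_val_of_notMem (Finset.notMem_erase i _), Multiset.map_cons,
    multiset_esymm_cons_succ, Finset.esymm_map_val, Finset.esymm_map_val, esymmErase, esymmErase]

lemma pderiv_esymmErase (i : σ) (n : ℕ) : pderiv i (esymmErase R i n) = 0 := by
  have hsupp : esymmErase R i n ∈ supported R {i}ᶜ :=
    sum_mem fun t ht => prod_mem fun j hj => Algebra.subset_adjoin <| Set.mem_image_of_mem _ <|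
      Finset.ne_of_mem_erase <| (Finset.mem_powersetCard.mp ht).1 hj
  exact pderiv_eq_zero_of_notMem_vars fun hi => mem_supported.mp hsupp hi rfl

lemma pderiv_esymm_succ (i : σ) (n : ℕ) : pderiv i (esymm σ R (n + 1)) = esymmErase R i n := by
  simp [esymm_succ_eq_esymmErase_add R i, pderiv_esymmErase]

end Erase

lemma pderiv_esymm_three [CommRing R] (i : σ) :
    pderiv i (esymm σ R 3) = esymm σ R 2 - X i * psum σ R 1 + X i ^ 2 := by
  classical
  have h₀ : esymmErase R i 0 = 1 := by simp [esymmErase]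
  have h₁ := esymm_succ_eq_esymmErase_add R i 0
  have h₂ := esymm_succ_eq_esymmErase_add R i 1
  rw [zero_add, esymm_one, h₀] at h₁
  rw [pderiv_esymm_succ, psum_one]
  linear_combination X i * h₁ - h₂

end PartialDerivatives

section InvariantCubic

variable {σ R : Type*} [Fintype σ] [CommRing R]

/-- The general symmetric cubic form `z₀h₀ + z₁h₁ + z₂h₂` in the variables `σ`, with `h₀ = p₃`,
`h₁ = p₁p₂ - p₃` and `h₂ = e₃` in terms of power sums and elementary symmetric polynomials. -/
def invariantCubic (z0 z1 z2 : R) : MvPolynomial σ R :=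
  C z0 * psum σ R 3 + C z1 * (psum σ R 1 * psum σ R 2 - psum σ R 3) + C z2 * esymm σ R 3

/-- The cubic component of the discriminant of the family `invariantCubic` in four variables. -/
def discriminantCubic (z0 z1 z2 : R) : R :=
  9 * z0 ^ 3 + 9 * z0 ^ 2 * z1 - 3 * z0 ^ 2 * z2 - 9 * z0 * z1 ^ 2
    - 6 * z0 * z1 * z2 + 4 * z0 * z2 ^ 2 + 7 * z1 ^ 3 - 3 * z1 ^ 2 * z2

lemma isSymmetric_invariantCubic (z0 z1 z2 : R) :
    (invariantCubic z0 z1 z2 : MvPolynomial σ R).IsSymmetric := fun e => by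
  simp only [invariantCubic, map_add, map_sub, map_mul, rename_C, rename_psum, rename_esymm]

lemma eval_pderiv_invariantCubic (z0 z1 z2 : R) (x : σ → R) (i : σ) :
    eval x (pderiv i (invariantCubic z0 z1 z2)) =
      (3 * z0 - 3 * z1 + z2) * x i ^ 2 + (2 * z1 - z2) * (∑ j, x j) * x i
        + (z1 * ∑ j, x j ^ 2 + z2 * eval x (esymm σ R 2)) := by
  have eval_psum (n : ℕ) : eval x (psum σ R n) = ∑ j, x j ^ n := by simp [psum]
  simp only [invariantCubic, map_add, map_sub, map_mul, map_pow, map_natCast, map_zero,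
    pderiv_C, pderiv_mul, pderiv_psum, pderiv_esymm_three, eval_C, eval_X, eval_psum, pow_one]
  push_cast
  ring

end InvariantCubic

section FourVariables

lemma esymm_fin_four_two (R : Type*) [CommSemiring R] :
    esymm (Fin 4) R 2 =
      X 0 * X 1 + X 0 * X 2 + X 0 * X 3 + X 1 * X 2 + X 1 * X 3 + X 2 * X 3 := by
  have pairs : Finset.powersetCard 2 (Finset.univ : Finset (Fin 4)) =
      {{0, 1}, {0, 2}, {0, 3}, {1, 2}, {1, 3}, {2, 3}} := by decide
  rw [esymm, pairs]
  repeat rw [Finset.sum_insert (by decide)]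
  simp only [Finset.sum_singleton, Finset.prod_insert, Finset.prod_singleton,
    Finset.mem_singleton, Fin.isValue, Fin.reduceEq, not_false_eq_true]
  ring

lemma esymm_fin_four_three (R : Type*) [CommSemiring R] :
    esymm (Fin 4) R 3 =
      X 0 * X 1 * X 2 + X 0 * X 1 * X 3 + X 0 * X 2 * X 3 + X 1 * X 2 * X 3 := by
  have triples : Finset.powersetCard 3 (Finset.univ : Finset (Fin 4)) =
      {{0, 1, 2}, {0, 1, 3}, {0, 2, 3}, {1, 2, 3}} := by decide
  rw [esymm, triples]
  repeat rw [Finset.sum_insert (by decide)]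
  simp only [Finset.sum_singleton, Finset.prod_insert, Finset.prod_singleton, Finset.mem_insert,
    Finset.mem_singleton, Fin.isValue, Fin.reduceEq, or_self, not_false_eq_true]
  ring

variable {R : Type*} [CommRing R]

lemma eval_pderiv_invariantCubic_one_three (z0 z1 z2 c d : R) (i : Fin 4) :
    eval ![c, d, d, d] (pderiv i (invariantCubic z0 z1 z2)) =
      if i = 0 then 3 * (z0 * c ^ 2 + 2 * z1 * c * d + (z1 + z2) * d ^ 2)
      else z1 * c ^ 2 + 2 * (z1 + z2) * c * d + (3 * z0 + 6 * z1 + z2) * d ^ 2 := by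
  rw [eval_pderiv_invariantCubic]
  fin_cases i <;>
  · simp only [Fin.sum_univ_four, esymm_fin_four_two, map_add, map_mul, eval_X, Fin.isValue,
      Fin.zero_eta, Fin.mk_one, Fin.reduceFinMk, Matrix.cons_val, Fin.reduceEq, reduceIte]
    ring

lemma eval_pderiv_invariantCubic_two_two (z0 z1 z2 c d : R) (i : Fin 4) :
    eval ![c, c, d, d] (pderiv i (invariantCubic z0 z1 z2)) =
      if i < 2 then 3 * (z0 + z1) * c ^ 2 + (2 * z1 + z2) * (2 * c * d + d ^ 2)
      else 3 * (z0 + z1) * d ^ 2 + (2 * z1 + z2) * (2 * c * d + c ^ 2) := by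
  rw [eval_pderiv_invariantCubic]
  fin_cases i <;>
  · simp only [Fin.sum_univ_four, esymm_fin_four_two, map_add, map_mul, eval_X, Fin.isValue,
      Fin.zero_eta, Fin.mk_one, Fin.reduceFinMk, Matrix.cons_val, Fin.reduceLT, reduceIte]
    ring

end FourVariables

section SingularMembers

variable {R : Type*} [CommRing R]

lemma isSingularPoint_ones [Nontrivial R] {z0 z1 z2 : R} (h : z0 + 3 * z1 + z2 = 0) :
    IsSingularPoint (invariantCubic z0 z1 z2) ![1, 1, 1, 1] := by
  refine ⟨by simp, fun i => ?_⟩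
  rw [eval_pderiv_invariantCubic_one_three]
  split_ifs <;> linear_combination 3 * h

lemma isSingularPoint_one_one_neg_one_neg_one [Nontrivial R] {z0 z1 z2 : R}
    (h : 3 * z0 + z1 - z2 = 0) :
    IsSingularPoint (invariantCubic z0 z1 z2) ![1, 1, -1, -1] := by
  refine ⟨by simp, fun i => ?_⟩
  rw [eval_pderiv_invariantCubic_two_two]
  split_ifs <;> linear_combination h

lemma isSingularPoint_fourth_roots_of_unity [Nontrivial R] {z0 z1 z2 ι : R} (hι : ι * ι = -1)
    (h : 3 * z0 - 3 * z1 + z2 = 0) :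
    IsSingularPoint (invariantCubic z0 z1 z2) ![1, ι, -1, -ι] := by
  refine ⟨by simp, fun i => ?_⟩
  have hp₁ : ∑ j, ![1, ι, -1, -ι] j = 0 := by simp [Fin.sum_univ_four]
  have hp₂ : ∑ j, ![1, ι, -1, -ι] j ^ 2 = 0 := by
    simp only [Fin.sum_univ_four, Matrix.cons_val]
    linear_combination 2 * hι
  have he₂ : eval ![1, ι, -1, -ι] (esymm (Fin 4) R 2) = 0 := by
    simp only [esymm_fin_four_two, map_add, map_mul, eval_X, Matrix.cons_val]
    linear_combination -hι
  simp [eval_pderiv_invariantCubic, h, hp₁, hp₂, he₂]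

-- The point is `(c, d, d, d)`, where `(c : d)` is the zero of the factor of `∂f/∂x₀ - ∂f/∂x₁` other
-- than `c - d`.
lemma isSingularPoint_of_discriminantCubic_eq_zero [NoZeroDivisors R] [NeZero (2 : R)]
    {z0 z1 z2 : R} (hlead : 3 * z0 - 3 * z1 + z2 ≠ 0) (h : discriminantCubic z0 z1 z2 = 0) :
    IsSingularPoint (invariantCubic z0 z1 z2)
      ![-(3 * z0 + 3 * z1 - 2 * z2), 3 * z0 - z1, 3 * z0 - z1, 3 * z0 - z1] := by
  unfold discriminantCubic at h
  refine ⟨fun hzero => hlead ?_, fun i => ?_⟩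
  · have hc : -(3 * z0 + 3 * z1 - 2 * z2) = 0 := congrFun hzero 0
    have hd : 3 * z0 - z1 = 0 := congrFun hzero 1
    refine (mul_eq_zero.mp ?_).resolve_left (NeZero.ne (2 : R))
    linear_combination hc + 3 * hd
  · rw [eval_pderiv_invariantCubic_one_three]
    split_ifs <;> linear_combination 3 * h

end SingularMembers

section SingularPoints

variable {R : Type*} [CommRing R] [NoZeroDivisors R]

lemma add_three_mul_add_eq_zero_of_isSingularPoint [NeZero (3 : R)] {z0 z1 z2 c : R}
    (hx : IsSingularPoint (invariantCubic z0 z1 z2) ![c, c, c, c]) :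
    z0 + 3 * z1 + z2 = 0 := by
  have hc : c ≠ 0 := fun h => hx.1 (by simp [h])
  have hgrad := hx.2 0
  rw [eval_pderiv_invariantCubic_one_three, if_pos rfl] at hgrad
  refine (mul_eq_zero.mp ?_).resolve_left (mul_ne_zero (NeZero.ne (3 : R)) (pow_ne_zero 2 hc))
  linear_combination hgrad

lemma discriminantCubic_eq_zero_of_isSingularPoint [NeZero (3 : R)] {z0 z1 z2 c d : R}
    (hcd : c ≠ d) (hx : IsSingularPoint (invariantCubic z0 z1 z2) ![c, d, d, d]) :
    discriminantCubic z0 z1 z2 = 0 := by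
  have hne : c ≠ 0 ∨ d ≠ 0 := by
    by_contra! h
    exact hcd (h.1.trans h.2.symm)
  have hgrad₀ := hx.2 0
  have hgrad₁ := hx.2 1
  rw [eval_pderiv_invariantCubic_one_three, if_pos rfl] at hgrad₀
  rw [eval_pderiv_invariantCubic_one_three, if_neg (by decide)] at hgrad₁
  have hlin : (3 * z0 - z1) * c + (3 * z0 + 3 * z1 - 2 * z2) * d = 0 := by
    refine (mul_eq_zero.mp ?_).resolve_left (sub_ne_zero.mpr hcd)
    linear_combination hgrad₀ - hgrad₁
  have hres := quadratic_form_eq_zero_of_linear_form_eq_zero hne hlin hgrad₁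
  refine (mul_eq_zero.mp ?_).resolve_left (NeZero.ne (3 : R))
  unfold discriminantCubic
  linear_combination hres

lemma three_mul_add_sub_eq_zero_of_isSingularPoint {z0 z1 z2 c d : R} (hcd : c ≠ d)
    (hx : IsSingularPoint (invariantCubic z0 z1 z2) ![c, c, d, d]) :
    3 * z0 + z1 - z2 = 0 := by
  have hgrad₀ := hx.2 0
  have hgrad₂ := hx.2 2
  rw [eval_pderiv_invariantCubic_two_two, if_pos (by decide)] at hgrad₀
  rw [eval_pderiv_invariantCubic_two_two, if_neg (by decide)] at hgrad₂
  have hprod : (c + d) * (3 * z0 + z1 - z2) = 0 := by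
    refine (mul_eq_zero.mp ?_).resolve_left (sub_ne_zero.mpr hcd)
    linear_combination hgrad₀ - hgrad₂
  rcases mul_eq_zero.mp hprod with hsum | h
  · obtain rfl : d = -c := by linear_combination hsum
    have hc : c ≠ 0 := fun h => hcd (by simp [h])
    refine (mul_eq_zero.mp ?_).resolve_left (pow_ne_zero 2 hc)
    linear_combination hgrad₀
  · exact h

end SingularPoints

section Discriminant

variable {K : Type*} [Field K] {z0 z1 z2 : K}

lemma exists_isSingularPoint_two_values (hlead : 3 * z0 - 3 * z1 + z2 ≠ 0) {x : Fin 4 → K}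
    (hx : IsSingularPoint (invariantCubic z0 z1 z2) x) :
    ∃ c d : K, IsSingularPoint (invariantCubic z0 z1 z2) ![c, d, d, d] ∨
      IsSingularPoint (invariantCubic z0 z1 z2) ![c, c, d, d] := by
  have hroot := fun i => (eval_pderiv_invariantCubic z0 z1 z2 x i).symm.trans (hx.2 i)
  obtain ⟨i, j, c, d, hswap⟩ := exists_comp_swap_eq_of_two_values (x := x) fun i =>
    eq_or_eq_neg_div_sub_of_quadratic hlead (hroot 0) (hroot i)
  have hperm := hx.comp_perm (isSymmetric_invariantCubic z0 z1 z2) (Equiv.swap i j)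
  refine ⟨c, d, ?_⟩
  rcases hswap with h | h <;> rw [h] at hperm
  · exact Or.inl hperm
  · exact Or.inr hperm

lemma discriminant_eq_zero_of_isSingularPoint [NeZero (3 : K)] {x : Fin 4 → K}
    (hx : IsSingularPoint (invariantCubic z0 z1 z2) x) :
    (3 * z0 + z1 - z2) * (z0 + 3 * z1 + z2) * (3 * z0 - 3 * z1 + z2) *
      discriminantCubic z0 z1 z2 = 0 := by
  by_cases hlead : 3 * z0 - 3 * z1 + z2 = 0
  · simp [hlead]
  obtain ⟨c, d, hx⟩ := exists_isSingularPoint_two_values hlead hx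
  rcases eq_or_ne c d with rfl | hcd
  · simp [add_three_mul_add_eq_zero_of_isSingularPoint (or_self_iff.mp hx)]
  rcases hx with hx | hx
  · simp [discriminantCubic_eq_zero_of_isSingularPoint hcd hx]
  · simp [three_mul_add_sub_eq_zero_of_isSingularPoint hcd hx]

lemma exists_isSingularPoint_of_discriminant_eq_zero [NeZero (2 : K)] (hsq : IsSquare (-1 : K))
    (h : (3 * z0 + z1 - z2) * (z0 + 3 * z1 + z2) * (3 * z0 - 3 * z1 + z2) *
      discriminantCubic z0 z1 z2 = 0) :
    ∃ x : Fin 4 → K, IsSingularPoint (invariantCubic z0 z1 z2) x := by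
  obtain ⟨ι, hι⟩ := hsq
  by_cases hlead : 3 * z0 - 3 * z1 + z2 = 0
  · exact ⟨_, isSingularPoint_fourth_roots_of_unity hι.symm hlead⟩
  rcases mul_eq_zero.mp h with hlin | hcubic
  · rcases mul_eq_zero.mp ((mul_eq_zero.mp hlin).resolve_right hlead) with h | h
    · exact ⟨_, isSingularPoint_one_one_neg_one_neg_one h⟩
    · exact ⟨_, isSingularPoint_ones h⟩
  · exact ⟨_, isSingularPoint_of_discriminantCubic_eq_zero hlead hcubic⟩

end Discriminant

lemma h0_eq_psum : h0 = psum (Fin 4) ℂ 3 := by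
  simp [h0, psum, Fin.sum_univ_four]

lemma h1_eq_psum_mul_psum_sub_psum :
    h1 = psum (Fin 4) ℂ 1 * psum (Fin 4) ℂ 2 - psum (Fin 4) ℂ 3 := by
  simp only [h1, psum, pow_one, Fin.sum_univ_four, Fin.isValue, Fin.reduceEq, reduceIte]
  ring

lemma h2_eq_esymm : h2 = esymm (Fin 4) ℂ 3 := by
  rw [h2, esymm_fin_four_three]

theorem discriminant_S4_invariant_cubics_general {K : Type*} [Field K] [NeZero (2 : K)]
    [NeZero (3 : K)] (hsq : IsSquare (-1 : K)) (z0 z1 z2 : K) :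
    (∃ x : Fin 4 → K, IsSingularPoint (invariantCubic z0 z1 z2) x) ↔
      (3 * z0 + z1 - z2) * (z0 + 3 * z1 + z2) * (3 * z0 - 3 * z1 + z2) *
        discriminantCubic z0 z1 z2 = 0 :=
  ⟨fun ⟨_, hx⟩ => discriminant_eq_zero_of_isSingularPoint hx,
    exists_isSingularPoint_of_discriminant_eq_zero hsq⟩

/-- The discriminant of the family of `S₄`-invariant cubic surfaces: for
`(z₀,z₁,z₂) ≠ 0`, the cubic surface defined by `f = z₀h₀ + z₁h₁ + z₂h₂` is singular
(its partial derivatives have a common zero in `ℂ⁴ ∖ {0}`) if and only if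
`(3z₀+z₁-z₂)(z₀+3z₁+z₂)(3z₀-3z₁+z₂)(9z₀³+9z₀²z₁-3z₀²z₂-9z₀z₁²-6z₀z₁z₂+4z₀z₂²+7z₁³-3z₁²z₂) = 0`. -/
theorem discriminant_S4_invariant_cubics
    (z0 z1 z2 : ℂ) (hz : ¬ (z0 = 0 ∧ z1 = 0 ∧ z2 = 0))
    (f : MvPolynomial (Fin 4) ℂ) (hf : f = C z0 * h0 + C z1 * h1 + C z2 * h2) :
    (∃ x : Fin 4 → ℂ, x ≠ 0 ∧ ∀ i : Fin 4, eval x (pderiv i f) = 0) ↔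
      (3 * z0 + z1 - z2) * (z0 + 3 * z1 + z2) * (3 * z0 - 3 * z1 + z2) *
        (9 * z0 ^ 3 + 9 * z0 ^ 2 * z1 - 3 * z0 ^ 2 * z2 - 9 * z0 * z1 ^ 2
          - 6 * z0 * z1 * z2 + 4 * z0 * z2 ^ 2 + 7 * z1 ^ 3 - 3 * z1 ^ 2 * z2) = 0 := by
  rw [hf, h0_eq_psum, h1_eq_psum_mul_psum_sub_psum, h2_eq_esymm]
  exact discriminant_S4_invariant_cubics_general ⟨Complex.I, Complex.I_mul_I.symm⟩ z0 z1 z2
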